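/- Let V be a finite-dimensional representation of a group G over a field k with 1 ≤ dim V ≤ 3. Then the following are equivalent: V is dense; V is thick; V is irreducible. -/

import Mathlib

/-!
In every dimension `n`, both `m`-thickness and `m`-density are invariant under `m ↔ n - m`. For
thickness, `gA ⊕ B = V` says the same as `g⁻¹B ⊕ A = V`. For density, the wedge pairing
`⋀^m V × ⋀^(n-m) V → ⋀^n V ≅ k` is equivariant, so the annihilator in `⋀^m V` of an invariant
`W ≤ ⋀^(n-m) V` is invariant, hence `⋀^m V` or `0`. In the first case `W = 0`, because wedging with
the basis vector `e_{sᶜ}` picks out, up to sign, the coordinate at `e_s`. In the second case `⋀^m V`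
embeds in `Hom(W, ⋀^n V)`, and counting dimensions gives `W = ⋀^(n-m) V`.

Both properties always hold for `m = n`, so up to the symmetry only `m = 1` is left when `n ≤ 3`.
There `1`-density is irreducibility because `⋀^1 V = V`. If `V` is irreducible, the translates of a
line span `V`, so some translate avoids a given hyperplane; conversely, a proper nonzero invariant
subspace contains a line and lies in a hyperplane, and so do all translates of that line.
-/

open Module

variable {k G V : Type*} [Field k] [Group G] [AddCommGroup V] [Module k V]

/-- A finite-dimensional representation `ρ : G → GL(V)` is `m`-thick if for any subspaces
`V₁, V₂ ⊆ V` with `dim V₁ = m` and `dim V₂ = dim V - m` there is `g ∈ G` with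
`(ρ(g) V₁) ⊕ V₂ = V`. -/
def IsMThick (ρ : Representation k G V) (m : ℕ) : Prop :=
  ∀ V₁ V₂ : Submodule k V, finrank k V₁ = m → finrank k V₂ = finrank k V - m →
    ∃ g : G, IsCompl (V₁.map (ρ g)) V₂

/-- A representation is `m`-dense if the induced representation on the `m`-th exterior power
`⋀^m V` (a submodule of the exterior algebra, on which `g` acts by the functorially induced map)
is irreducible: `⋀^m V` is nonzero and has no `G`-invariant subspace other than `0` and itself. -/
def IsMDense (ρ : Representation k G V) (m : ℕ) : Prop :=
  ⋀[k]^m V ≠ ⊥ ∧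
  ∀ W : Submodule k (ExteriorAlgebra k V), W ≤ ⋀[k]^m V →
    (∀ g : G, W.map (ExteriorAlgebra.map (ρ g)).toLinearMap ≤ W) →
    W = ⊥ ∨ W = ⋀[k]^m V

/-- A representation is irreducible if `V` is nonzero and has no `G`-invariant subspace
other than `0` and `V`. -/
def RepIrreducible (ρ : Representation k G V) : Prop :=
  (∃ v : V, v ≠ 0) ∧
  ∀ W : Submodule k V, (∀ g : G, W.map (ρ g) ≤ W) → W = ⊥ ∨ W = ⊤

/-- A representation is thick if it is `m`-thick for every `0 < m < dim V`. -/
def IsThick (ρ : Representation k G V) : Prop :=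
  ∀ m : ℕ, 0 < m → m < finrank k V → IsMThick ρ m

/-- A representation is dense if it is `m`-dense for every `0 < m < dim V`. -/
def IsDense (ρ : Representation k G V) : Prop :=
  ∀ m : ℕ, 0 < m → m < finrank k V → IsMDense ρ m

section Thick

variable {R M : Type*} [CommSemiring R] [AddCommMonoid M] [Module R M]

lemma isCompl_map_inv_iff (ρ : Representation R G M) (g : G) (A B : Submodule R M) :
    IsCompl (A.map (ρ g⁻¹)) B ↔ IsCompl A (B.map (ρ g)) := by
  let e : M ≃ₗ[R] M := LinearEquiv.ofBijective (ρ g) (ρ.apply_bijective g)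
  have hA : (A.map (ρ g⁻¹)).map (ρ g) = A := by
    rw [← Submodule.map_comp, ← Module.End.mul_eq_comp, ← map_mul, mul_inv_cancel, map_one,
      Module.End.one_eq_id, Submodule.map_id]
  nth_rewrite 2 [← hA]
  exact (Submodule.orderIsoMapComap e).isCompl_iff

lemma map_iSup_map_le (ρ : Representation R G M) (A : Submodule R M) (h : G) :
    (⨆ g, A.map (ρ g)).map (ρ h) ≤ ⨆ g, A.map (ρ g) := by
  rw [Submodule.map_iSup]
  refine iSup_le fun g ↦ ?_
  rw [← Submodule.map_comp, ← Module.End.mul_eq_comp, ← map_mul]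
  exact le_iSup (fun g ↦ A.map (ρ g)) (h * g)

lemma le_iSup_map (ρ : Representation R G M) (A : Submodule R M) : A ≤ ⨆ g, A.map (ρ g) := by
  simpa [Module.End.one_eq_id] using le_iSup (fun g ↦ A.map (ρ g)) 1

lemma finrank_map_rep (ρ : Representation R G M) (g : G) (A : Submodule R M) :
    finrank R (A.map (ρ g)) = finrank R A :=
  (Submodule.equivMapOfInjective (ρ g) (ρ.apply_bijective g).injective A).finrank_eq.symm

lemma finrank_add_one_eq_of_isCoatom {K E : Type*} [DivisionRing K] [AddCommGroup E] [Module K E]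
    [FiniteDimensional K E] {H : Submodule K E} (hH : IsCoatom H) :
    finrank K H + 1 = finrank K E := by
  rw [← H.finrank_quotient_add_finrank,
    isSimpleModule_iff_finrank_eq_one.1 (isSimpleModule_iff_isCoatom.2 hH), add_comm]

lemma isCompl_of_finrank_eq_one_of_not_le {K E : Type*} [DivisionRing K] [AddCommGroup E]
    [Module K E] [FiniteDimensional K E] {L H : Submodule K E} (hL : finrank K L = 1)
    (hH : finrank K H + 1 = finrank K E) (hLH : ¬L ≤ H) : IsCompl L H :=
  (Submodule.isCompl_iff_disjoint L H (by omega)).2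
    ((Submodule.isAtom_iff_finrank_eq_one.2 hL).not_le_iff_disjoint.1 hLH)

lemma isMThick_finrank [FiniteDimensional k V] (ρ : Representation k G V) :
    IsMThick ρ (finrank k V) := by
  intro A B hA hB
  obtain rfl : A = ⊤ := Submodule.eq_top_of_finrank_eq hA
  obtain rfl : B = ⊥ := Submodule.finrank_eq_zero.1 (by rw [hB, Nat.sub_self])
  exact ⟨1, by simpa [Module.End.one_eq_id] using isCompl_top_bot⟩

lemma IsMThick.of_add_eq_finrank {ρ : Representation k G V} {m p : ℕ} (h : IsMThick ρ m)
    (hmp : m + p = finrank k V) : IsMThick ρ p := by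
  intro A B hA hB
  obtain ⟨g, hg⟩ := h B A (by omega) (by omega)
  exact ⟨g⁻¹, (isCompl_map_inv_iff ρ g A B).2 hg.symm⟩

lemma RepIrreducible.isMThick_one [FiniteDimensional k V] {ρ : Representation k G V}
    (h : RepIrreducible ρ) : IsMThick ρ 1 := by
  intro L H hL hH
  have : Nontrivial V := nontrivial_iff.2 ⟨h.1.choose, 0, h.1.choose_spec⟩
  have hpos : 0 < finrank k V := finrank_pos
  suffices ∃ g, ¬L.map (ρ g) ≤ H by
    obtain ⟨g, hg⟩ := this
    exact ⟨g, isCompl_of_finrank_eq_one_of_not_le ((finrank_map_rep ρ g L).trans hL) (by omega) hg⟩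
  by_contra! hle
  have hLU : L ≤ ⨆ g, L.map (ρ g) := le_iSup_map ρ L
  have hUH : ⨆ g, L.map (ρ g) ≤ H := iSup_le hle
  rcases h.2 _ (map_iSup_map_le ρ L) with hbot | htop
  · rw [hbot, le_bot_iff] at hLU
    rw [hLU, finrank_bot] at hL
    exact zero_ne_one hL
  · rw [htop, top_le_iff] at hUH
    rw [hUH, finrank_top] at hH
    omega

lemma IsMThick.repIrreducible [FiniteDimensional k V] [Nontrivial V] {ρ : Representation k G V}
    (h : IsMThick ρ 1) : RepIrreducible ρ := by
  refine ⟨exists_ne 0, fun W hW ↦ ?_⟩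
  by_contra! ⟨hbot, htop⟩
  obtain ⟨L, hL, hLW⟩ := (eq_bot_or_exists_atom_le W).resolve_left hbot
  obtain ⟨H, hH, hWH⟩ := (eq_top_or_exists_le_coatom W).resolve_left htop
  obtain ⟨g, hg⟩ := h L H (Submodule.isAtom_iff_finrank_eq_one.1 hL)
    (Nat.eq_sub_of_add_eq (finrank_add_one_eq_of_isCoatom hH))
  have hLH : L.map (ρ g) ≤ H := (Submodule.map_mono hLW).trans ((hW g).trans hWH)
  have hLg : L.map (ρ g) = ⊥ := hg.disjoint.eq_bot_of_le hLH
  exact hL.1 ((Submodule.map_eq_bot_iff (e := .ofBijective (ρ g) (ρ.apply_bijective g))).1 hLg)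

lemma isMThick_one_iff_repIrreducible [FiniteDimensional k V] [Nontrivial V]
    {ρ : Representation k G V} : IsMThick ρ 1 ↔ RepIrreducible ρ :=
  ⟨IsMThick.repIrreducible, RepIrreducible.isMThick_one⟩

end Thick

section ExteriorAlgebra

variable {R M : Type*} [CommRing R] [AddCommGroup M] [Module R M]

lemma exteriorPower_one_eq_range : ⋀[R]^1 M = LinearMap.range (ExteriorAlgebra.ι R) :=
  pow_one _

lemma map_ι_map_le_iff {f : M →ₗ[R] M} {W : Submodule R M} :
    (W.map (ExteriorAlgebra.ι R)).map (ExteriorAlgebra.map f).toLinearMap ≤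
      W.map (ExteriorAlgebra.ι R) ↔ W.map f ≤ W := by
  rw [← Submodule.map_comp, ExteriorAlgebra.map_comp_ι, Submodule.map_comp,
    Submodule.map_le_map_iff_of_injective ExteriorAlgebra.ι_leftInverse.injective]

lemma map_exteriorPower_le {N : Type*} [AddCommGroup N] [Module R N] (f : M →ₗ[R] N) (m : ℕ) :
    (⋀[R]^m M).map (ExteriorAlgebra.map f).toLinearMap ≤ ⋀[R]^m N := by
  rw [Submodule.map_pow, ExteriorAlgebra.ι_range_map_map]
  exact pow_le_pow_left' LinearMap.map_le_range m

/-- The elements `u` of `⋀^m M` with `u ∧ w = 0` for all `w ∈ W`: the orthogonal of `W` under the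
wedge pairing, used to pass between invariant subspaces of complementary exterior powers. `W` may be
any submodule of the exterior algebra, as in `IsMDense`. -/
noncomputable def wedgeAnnihilator (m : ℕ) (W : Submodule R (ExteriorAlgebra R M)) :
    Submodule R (ExteriorAlgebra R M) :=
  ⋀[R]^m M ⊓ LinearMap.ker ((LinearMap.mul R (ExteriorAlgebra R M)).compl₂ W.subtype)

lemma mem_wedgeAnnihilator {m : ℕ} {W : Submodule R (ExteriorAlgebra R M)}
    {u : ExteriorAlgebra R M} :
    u ∈ wedgeAnnihilator m W ↔ u ∈ ⋀[R]^m M ∧ ∀ w ∈ W, u * w = 0 := by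
  simp [wedgeAnnihilator, LinearMap.ext_iff]

lemma map_wedgeAnnihilator_le {N : Type*} [AddCommGroup N] [Module R N] {f : M →ₗ[R] N}
    {g : N →ₗ[R] M} (hfg : f ∘ₗ g = LinearMap.id) (m : ℕ)
    {U : Submodule R (ExteriorAlgebra R M)} {W : Submodule R (ExteriorAlgebra R N)}
    (hWU : W.map (ExteriorAlgebra.map g).toLinearMap ≤ U) :
    (wedgeAnnihilator m U).map (ExteriorAlgebra.map f).toLinearMap ≤ wedgeAnnihilator m W := by
  rintro _ ⟨u, hu, rfl⟩
  obtain ⟨hum, huU⟩ := mem_wedgeAnnihilator.1 hu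
  refine mem_wedgeAnnihilator.2 ⟨map_exteriorPower_le f m ⟨u, hum, rfl⟩, fun w hw ↦ ?_⟩
  have hfgw : ExteriorAlgebra.map f (ExteriorAlgebra.map g w) = w := by
    rw [← AlgHom.comp_apply, ExteriorAlgebra.map_comp_map, hfg, ExteriorAlgebra.map_id,
      AlgHom.id_apply]
  have hugw : u * ExteriorAlgebra.map g w = 0 := huU _ (hWU ⟨w, hw, rfl⟩)
  calc ExteriorAlgebra.map f u * w
      = ExteriorAlgebra.map f (u * ExteriorAlgebra.map g w) := by rw [map_mul, hfgw]
    _ = 0 := by rw [hugw, map_zero]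

section Basis

variable {I : Type*} [Fintype I] [LinearOrder I] (b : Basis I R M) {p : ℕ}

lemma exists_basis_compl_mul_basis_eq (s : Finset I) :
    ∃ ε : ℤˣ, b.ExteriorAlgebra sᶜ * b.ExteriorAlgebra s = ε • b.ExteriorAlgebra Finset.univ := by
  have hdisj : Disjoint (sᶜ) s := disjoint_compl_left
  have hunion : sᶜ.disjUnion s hdisj = Finset.univ := by
    rw [Finset.disjUnion_eq_union, Finset.union_comm, Finset.union_compl]
  rw [← hunion]
  exact ⟨_, ExteriorAlgebra.basis_mul_of_disjoint b (Set.powersetCard.ofCard rfl)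
    (Set.powersetCard.ofCard rfl) hdisj⟩

lemma basis_compl_mul_basis_eq_zero {s t : Finset I} (hst : ¬t ⊆ s) :
    b.ExteriorAlgebra sᶜ * b.ExteriorAlgebra t = 0 :=
  ExteriorAlgebra.basis_mul_of_not_disjoint b (Set.powersetCard.ofCard rfl)
    (Set.powersetCard.ofCard rfl) (mt disjoint_compl_left_iff.1 hst)

lemma basis_compl_mul (s : Set.powersetCard I p) (w : ⋀[R]^p M) :
    b.ExteriorAlgebra (s : Finset I)ᶜ * w =
      (b.exteriorPower p).repr w s • (b.ExteriorAlgebra (s : Finset I)ᶜ * b.ExteriorAlgebra s) := by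
  nth_rewrite 1 [← (b.exteriorPower p).sum_repr w]
  rw [AddSubmonoidClass.coe_finsetSum, Finset.mul_sum, Finset.sum_eq_single s]
  · rw [Submodule.coe_smul, mul_smul_comm, ExteriorAlgebra.basis_eq_coe_basis]
  · intro t _ hts
    rw [Submodule.coe_smul, mul_smul_comm, ← ExteriorAlgebra.basis_eq_coe_basis,
      basis_compl_mul_basis_eq_zero b (mt Set.powersetCard.eq_iff_subset.2 hts), smul_zero]
  · simp

end Basis

lemma eq_zero_of_forall_exteriorPower_mul_eq_zero [Module.Free R M] [Module.Finite R M] {m p : ℕ}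
    (hmp : m + p = finrank R M) {w : ExteriorAlgebra R M} (hw : w ∈ ⋀[R]^p M)
    (h : ∀ u ∈ ⋀[R]^m M, u * w = 0) : w = 0 := by
  rcases subsingleton_or_nontrivial R with _ | _
  · exact (Module.subsingleton R (ExteriorAlgebra R M)).elim _ _
  let b := finBasis R M
  lift w to ⋀[R]^p M using hw
  refine ZeroMemClass.coe_eq_zero.2 ((b.exteriorPower p).forall_coord_eq_zero_iff.1 fun s ↦ ?_)
  have hmem : b.ExteriorAlgebra (s : Finset _)ᶜ ∈ ⋀[R]^m M := by
    rw [← Set.powersetCard.coe_compl (hm := hmp.trans (Fintype.card_fin _).symm),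
      ExteriorAlgebra.basis_eq_coe_basis]
    exact SetLike.coe_mem _
  obtain ⟨ε, hε⟩ := exists_basis_compl_mul_basis_eq b (s : Finset _)
  have hzero : ε • (b.exteriorPower p).repr w s • b.ExteriorAlgebra Finset.univ = 0 := by
    rw [smul_comm, ← hε, ← basis_compl_mul, h _ hmem]
  simpa using congrArg (b.ExteriorAlgebra.repr · Finset.univ) ((smul_eq_zero_iff_eq ε).1 hzero)

lemma eq_bot_of_exteriorPower_le_wedgeAnnihilator [Module.Free R M] [Module.Finite R M] {m p : ℕ}
    (hmp : m + p = finrank R M) {W : Submodule R (ExteriorAlgebra R M)} (hWp : W ≤ ⋀[R]^p M)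
    (hW : ⋀[R]^m M ≤ wedgeAnnihilator m W) : W = ⊥ :=
  (Submodule.eq_bot_iff W).2 fun w hw ↦ eq_zero_of_forall_exteriorPower_mul_eq_zero hmp (hWp hw)
    fun _ hu ↦ (mem_wedgeAnnihilator.1 (hW hu)).2 w hw

lemma exteriorPower_ne_bot [Nontrivial R] [Module.Free R M] [Module.Finite R M] {m : ℕ}
    (hm : m ≤ finrank R M) : ⋀[R]^m M ≠ ⊥ := by
  have hpos : 0 < finrank R (⋀[R]^m M) := by
    rw [exteriorPower.finrank_eq]
    exact Nat.choose_pos hm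
  intro hbot
  rw [hbot, finrank_bot] at hpos
  exact hpos.false

end ExteriorAlgebra

lemma eq_exteriorPower_of_wedgeAnnihilator_eq_bot [FiniteDimensional k V] {m p : ℕ}
    (hmp : m + p = finrank k V) {W : Submodule k (ExteriorAlgebra k V)} (hWp : W ≤ ⋀[k]^p V)
    (hW : wedgeAnnihilator m W = ⊥) : W = ⋀[k]^p V := by
  have : FiniteDimensional k W := Submodule.finiteDimensional_of_le hWp
  let wedge : ⋀[k]^m V →ₗ[k] W →ₗ[k] ⋀[k]^(m + p) V :=
    (DirectSum.gMulLHom k (A := fun i ↦ ⋀[k]^i V)).compl₂ (Submodule.inclusion hWp)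
  have hwedge : Function.Injective wedge := by
    refine (injective_iff_map_eq_zero wedge).2 fun u hu ↦ Subtype.ext ?_
    rw [ZeroMemClass.coe_zero, ← Submodule.mem_bot k, ← hW, mem_wedgeAnnihilator]
    exact ⟨u.2, fun w hw ↦ congrArg Subtype.val (LinearMap.congr_fun hu ⟨w, hw⟩)⟩
  have hle : finrank k (⋀[k]^m V) ≤ finrank k W := by
    simpa [finrank_linearMap, exteriorPower.finrank_eq, hmp] using
      LinearMap.finrank_le_finrank_of_injective hwedge
  refine Submodule.eq_of_le_of_finrank_le hWp ?_
  rwa [exteriorPower.finrank_eq, ← Nat.choose_symm_of_eq_add hmp.symm, ← exteriorPower.finrank_eq]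

lemma isMDense_finrank [FiniteDimensional k V] (ρ : Representation k G V) :
    IsMDense ρ (finrank k V) := by
  have hatom : IsAtom (⋀[k]^(finrank k V) V) :=
    Submodule.isAtom_iff_finrank_eq_one.2 (by rw [exteriorPower.finrank_eq, Nat.choose_self])
  exact ⟨hatom.1, fun W hW _ ↦ hatom.le_iff.1 hW⟩

lemma IsMDense.of_add_eq_finrank [FiniteDimensional k V] {ρ : Representation k G V} {m p : ℕ}
    (h : IsMDense ρ m) (hmp : m + p = finrank k V) : IsMDense ρ p := by
  refine ⟨exteriorPower_ne_bot (by omega), fun W hWp hW ↦ ?_⟩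
  have hinv (g : G) : (wedgeAnnihilator m W).map (ExteriorAlgebra.map (ρ g)).toLinearMap ≤
      wedgeAnnihilator m W :=
    map_wedgeAnnihilator_le (g := ρ g⁻¹) (LinearMap.ext (ρ.self_inv_apply g)) m (hW g⁻¹)
  rcases h.2 _ inf_le_left hinv with hbot | htop
  · exact .inr (eq_exteriorPower_of_wedgeAnnihilator_eq_bot hmp hWp hbot)
  · exact .inl (eq_bot_of_exteriorPower_le_wedgeAnnihilator hmp hWp htop.ge)

lemma isMDense_one_iff_repIrreducible {ρ : Representation k G V} :
    IsMDense ρ 1 ↔ RepIrreducible ρ := by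
  have hmap : Function.Injective (Submodule.map (ExteriorAlgebra.ι k : V →ₗ[k] _)) :=
    Submodule.map_injective_of_injective ExteriorAlgebra.ι_leftInverse.injective
  have hrange : ⋀[k]^1 V = Submodule.map (ExteriorAlgebra.ι k) ⊤ := by
    rw [exteriorPower_one_eq_range, LinearMap.range_eq_map]
  have hforall {P : Submodule k (ExteriorAlgebra k V) → Prop} :
      (∀ W ≤ ⋀[k]^1 V, P W) ↔ ∀ W : Submodule k V, P (W.map (ExteriorAlgebra.ι k)) := by
    rw [exteriorPower_one_eq_range]
    exact ⟨fun h W ↦ h _ LinearMap.map_le_range, fun h W hW ↦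
      Submodule.map_comap_eq_of_le hW ▸ h _⟩
  rw [IsMDense, hforall, RepIrreducible, hrange]
  have hbot (W : Submodule k V) : W.map (ExteriorAlgebra.ι k) = ⊥ ↔ W = ⊥ :=
    hmap.eq_iff' (Submodule.map_bot _)
  simp only [map_ι_map_le_iff, hmap.eq_iff, hbot, ne_eq, Submodule.eq_bot_iff (⊤ : Submodule k V),
    Submodule.mem_top, true_imp_iff, not_forall]

lemma forall_pos_lt_iff_one {n : ℕ} (h1 : 1 ≤ n) (h3 : n ≤ 3) {P : ℕ → Prop} (hn : P n)
    (hP : ∀ m p, m + p = n → P m → P p) : (∀ m, 0 < m → m < n → P m) ↔ P 1 := by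
  refine ⟨fun h ↦ ?_, fun h m hm0 hmn ↦ ?_⟩
  · obtain rfl | hlt := h1.eq_or_lt
    · exact hn
    · exact h 1 one_pos hlt
  · obtain rfl | hm : m = 1 ∨ 1 + m = n := by omega
    · exact h
    · exact hP 1 m hm h

/-- For a finite-dimensional representation `V` with `1 ≤ dim V ≤ 3`, the notions of
dense, thick, and irreducible coincide. -/
theorem dense_iff_thick_iff_irreducible_of_dim_le_three [FiniteDimensional k V]
    (ρ : Representation k G V) (h1 : 1 ≤ finrank k V) (h3 : finrank k V ≤ 3) :
    (IsDense ρ ↔ IsThick ρ) ∧ (IsThick ρ ↔ RepIrreducible ρ) := by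
  have : Nontrivial V := nontrivial_of_finrank_pos (R := k) h1
  have hthick : IsThick ρ ↔ RepIrreducible ρ :=
    (forall_pos_lt_iff_one h1 h3 (isMThick_finrank ρ)
      fun _ _ hmp h ↦ h.of_add_eq_finrank hmp).trans isMThick_one_iff_repIrreducible
  have hdense : IsDense ρ ↔ RepIrreducible ρ :=
    (forall_pos_lt_iff_one h1 h3 (isMDense_finrank ρ)
      fun _ _ hmp h ↦ h.of_add_eq_finrank hmp).trans isMDense_one_iff_repIrreducible
  exact ⟨hdense.trans hthick.symm, hthick⟩
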